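/- In every execution of Vaughan's algorithm on the token swapping instance T_{k,b}, the total number of happy swaps performed is at most bk. -/

import Mathlib

namespace Straying

/-- Apply a sequence of swaps to a placement (each token is named by its initial
vertex; the placement sends each token to its current vertex). -/
def applySeq {V : Type*} [DecidableEq V] (σ : List (V × V)) (p : Equiv.Perm V) :
    Equiv.Perm V :=
  σ.foldl (fun q e => q.trans (Equiv.swap e.1 e.2)) p

/-- The position of the token named `u` after the first `τ` swaps of `σ`. -/
def posAt {V : Type*} [DecidableEq V] (σ : List (V × V)) (u : V) (τ : ℕ) : V :=
  applySeq (σ.take τ) 1 u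

/-- The unordered pair of tokens exchanged by the `i`-th swap of `σ`. -/
def swappedPair {V : Type*} [DecidableEq V] (σ : List (V × V)) (i : Fin σ.length) :
    Sym2 V :=
  s((applySeq (σ.take i) 1).symm (σ.get i).1, (applySeq (σ.take i) 1).symm (σ.get i).2)

/-- A swap sequence is minimal if no pair of tokens swaps with each other more than
once. -/
def MinimalSeq {V : Type*} [DecidableEq V] (σ : List (V × V)) : Prop :=
  ∀ i j : Fin σ.length, i < j → swappedPair σ i ≠ swappedPair σ j

/-- A swap sequence is `ℓ`-straying (with respect to the system `P` of paths, `P u`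
being the path of the token named `u` from its initial vertex `u` to its target
vertex `π u`): at every intermediate configuration, every token is within distance
`ℓ` of the last vertex of its path that it has reached so far. -/
def IsStraying {V : Type*} [DecidableEq V] (G : SimpleGraph V) (π : Equiv.Perm V)
    (σ : List (V × V)) (P : ∀ u : V, G.Walk u (π u)) (ℓ : ℕ) : Prop :=
  ∀ τ ≤ σ.length, ∀ u : V, ∃ i ≤ (P u).length,
    (∃ τ' ≤ τ, posAt σ u τ' = (P u).getVert i) ∧
    (∀ j ≤ (P u).length, (∃ τ' ≤ τ, posAt σ u τ' = (P u).getVert j) → j ≤ i) ∧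
    G.dist (posAt σ u τ) ((P u).getVert i) ≤ ℓ

end Straying

namespace Straying

/-!
The instance `T_{k,b}`: a tree consisting of `b` branches (paths of length `k`) and a
set `L` of `k` extra leaves, all attached to a central vertex `c`.  The vertex `none`
is the center; `some (Sum.inl (j, i))` is the vertex of branch `j` at distance `i+1`
from the center; `some (Sum.inr l)` is the extra leaf `l`.  The tokens at the center
and the extra leaves are happy (target = initial vertex); the token at distance `i`
from `c` in branch `j` has its target at distance `i` from `c` in branch `j+1 (mod b)`.
-/

abbrev TV (b k : ℕ) := Option ((Fin b × Fin k) ⊕ Fin k)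

/-- Adjacency generator of the tree of `T_{k,b}`. -/
def trel {b k : ℕ} : TV b k → TV b k → Prop
  | none, some (Sum.inl (_, i)) => i.val = 0
  | none, some (Sum.inr _) => True
  | some (Sum.inl (j, i)), some (Sum.inl (j', i')) => j = j' ∧ i'.val = i.val + 1
  | _, _ => False

/-- The tree of the instance `T_{k,b}`. -/
def TGraph (b k : ℕ) : SimpleGraph (TV b k) := SimpleGraph.fromRel trel

/-- The target permutation of `T_{k,b}`: the token at distance `i` in branch `j` goes
to distance `i` in branch `j+1 (mod b)`; all other tokens stay put. -/
def piT (b k : ℕ) : Equiv.Perm (TV b k) :=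
  Equiv.optionCongr
    (Equiv.sumCongr (Equiv.prodCongr (finRotate b) (Equiv.refl (Fin k)))
      (Equiv.refl (Fin k)))

/-- Both tokens are branch tokens with initial vertices in the same branch. -/
def sameBranchB {b k : ℕ} (t₁ t₂ : TV b k) : Bool :=
  match t₁, t₂ with
  | some (Sum.inl (j, _)), some (Sum.inl (j', _)) => decide (j = j')
  | _, _ => false

/-- Both tokens are branch tokens with initial vertices in two different branches. -/
def diffBranchB {b k : ℕ} (t₁ t₂ : TV b k) : Bool :=
  match t₁, t₂ with
  | some (Sum.inl (j, _)), some (Sum.inl (j', _)) => decide (j ≠ j')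
  | _, _ => false

/-- The number of swaps of `σ` whose two swapped tokens satisfy `p`. -/
def countSwaps {V : Type*} [DecidableEq V] (p : V → V → Bool) :
    List (V × V) → Equiv.Perm V → ℕ
  | [], _ => 0
  | e :: rest, q =>
      (if p (q.symm e.1) (q.symm e.2) then 1 else 0) +
        countSwaps p rest (q.trans (Equiv.swap e.1 e.2))

end Straying

namespace Straying

/-!
Vaughan's algorithm.  A state is a pair `(p, q)` of placements: each token is named
by its initial vertex `u` and sits at vertex `p u`, while its destination token `u_f`
sits at vertex `q u` (initially `q = π`, placing each destination token at the
corresponding token's target vertex).  A token (resp. destination token) is *happy*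
when `p u = q u`; an unhappy token *wants* to move along an incident edge toward its
partner, i.e. to an adjacent vertex strictly closer to the partner.
-/

/-- The unhappy token named `u` wants to move (from `p u`) to the adjacent vertex
`w`, which is strictly closer to its destination token. -/
def WantsTok {V : Type*} (G : SimpleGraph V) (p q : Equiv.Perm V) (u : V) (w : V) : Prop :=
  G.Adj (p u) w ∧ G.dist w (q u) < G.dist (p u) (q u)

/-- The unhappy destination token named `u` wants to move (from `q u`) to the
adjacent vertex `w`, which is strictly closer to its token. -/
def WantsDest {V : Type*} (G : SimpleGraph V) (p q : Equiv.Perm V) (u : V) (w : V) : Prop :=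
  G.Adj (q u) w ∧ G.dist w (p u) < G.dist (q u) (p u)

/-- A happy swap: two adjacent tokens that want to move toward each other are
swapped (the destination tokens do not move). -/
def HappySwapStep {V : Type*} [DecidableEq V] (G : SimpleGraph V)
    (st st' : Equiv.Perm V × Equiv.Perm V) : Prop :=
  ∃ a c : V, G.Adj a c ∧
    WantsTok G st.1 st.2 (st.1.symm a) c ∧ WantsTok G st.1 st.2 (st.1.symm c) a ∧
    st'.1 = st.1.trans (Equiv.swap a c) ∧ st'.2 = st.2

/-- A happy destination swap: two adjacent destination tokens that want to move
toward each other are swapped (the tokens do not move). -/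
def HappyDestStep {V : Type*} [DecidableEq V] (G : SimpleGraph V)
    (st st' : Equiv.Perm V × Equiv.Perm V) : Prop :=
  ∃ a c : V, G.Adj a c ∧
    WantsDest G st.1 st.2 (st.2.symm a) c ∧ WantsDest G st.1 st.2 (st.2.symm c) a ∧
    st'.2 = st.2.trans (Equiv.swap a c) ∧ st'.1 = st.1

/-- A symmetric shove: `a` holds a token and a destination token that both want to
move to the adjacent vertex `c`, and `c` holds a happy pair; the tokens at `a, c` are
swapped and simultaneously the destination tokens at `a, c` are swapped. -/
def ShoveStep {V : Type*} [DecidableEq V] (G : SimpleGraph V)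
    (st st' : Equiv.Perm V × Equiv.Perm V) : Prop :=
  ∃ a c : V, G.Adj a c ∧
    st.1.symm c = st.2.symm c ∧
    WantsTok G st.1 st.2 (st.1.symm a) c ∧ WantsDest G st.1 st.2 (st.2.symm a) c ∧
    st'.1 = st.1.trans (Equiv.swap a c) ∧ st'.2 = st.2.trans (Equiv.swap a c)

/-!
STATEMENT 19: In every execution of Vaughan's algorithm on the token swapping
instance `T_{k,b}` — i.e. every sequence of states starting at `(1, π_{T_{k,b}})`,
ending with all tokens happy, in which every step is a happy swap, a happy
destination swap, or (only when neither of the first two operations is available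
anywhere) a symmetric shove — the total number of happy swaps performed is at most
`b·k`.
-/

/-- Strict tree order (`v` is a proper ancestor of `w`, rooted at the center). -/
def prec {b k : ℕ} : TV b k → TV b k → Prop
  | none, some _ => True
  | some (Sum.inl (j, i)), some (Sum.inl (j', i')) => j = j' ∧ i.val < i'.val
  | _, _ => False

/-- The branch of a vertex. -/
def br {b k : ℕ} : TV b k → Option (Fin b)
  | some (Sum.inl (j, _)) => some j
  | _ => none

section Aux
variable {b k : ℕ}

theorem prec_irrefl (v : TV b k) : ¬ prec v v := by
  rcases v with _ | ⟨j, i⟩ | l <;> simp [prec]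

theorem prec_trans {u v w : TV b k} (h : prec u v) (h' : prec v w) : prec u w := by
  rcases u with _ | ⟨j, i⟩ | l <;> rcases v with _ | ⟨j', i'⟩ | l' <;>
    rcases w with _ | ⟨j'', i''⟩ | l'' <;> simp only [prec] at h h' ⊢
  exact ⟨h.1.trans h'.1, h.2.trans h'.2⟩

theorem prec_none (v : TV b k) : ¬ prec v none := by
  rcases v with _ | ⟨j, i⟩ | l <;> simp [prec]

theorem none_prec {v : TV b k} (h : v ≠ none) : prec none v := by
  rcases v with _ | ⟨j, i⟩ | l <;> simp_all [prec]

theorem prec_br {v w : TV b k} (h : prec v w) (hv : v ≠ none) : br v = br w := by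
  rcases v with _ | ⟨j, i⟩ | l <;> rcases w with _ | ⟨j', i'⟩ | l' <;> simp_all [prec, br]

theorem prec_br_ne {v w : TV b k} (h : prec v w) (hv : v ≠ none) : br v ≠ none := by
  rcases v with _ | ⟨j, i⟩ | l <;> rcases w with _ | ⟨j', i'⟩ | l' <;> simp_all [prec, br]

theorem br_total {v w : TV b k} (h : br v = br w) (h0 : br v ≠ none) (hne : v ≠ w) :
    prec v w ∨ prec w v := by
  rcases v with _ | ⟨j, i⟩ | l <;> rcases w with _ | ⟨j', i'⟩ | l' <;>
    simp_all [prec, br, Fin.ext_iff]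

theorem br_ne {v : TV b k} (h : v ≠ none) (h' : ∀ l, v ≠ some (Sum.inr l)) : br v ≠ none := by
  rcases v with _ | ⟨j, i⟩ | l <;> simp_all [br]

theorem trel_prec {a c : TV b k} (h : trel a c) : prec a c := by
  rcases a with _ | ⟨j, i⟩ | l <;> rcases c with _ | ⟨j', i'⟩ | l' <;> simp_all [prec, trel]

theorem trel_between {a c u : TV b k} (h : trel a c) (h1 : prec a u) (h2 : prec u c) : False := by
  rcases a with _ | ⟨j, i⟩ | l <;> rcases c with _ | ⟨j', i'⟩ | l' <;>
    rcases u with _ | ⟨j'', i''⟩ | l'' <;> simp_all [prec, trel]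
  all_goals omega

/-- the only edge leaving the subtree of `c` is the edge to its parent `a`. -/
theorem trel_cross {a c u v : TV b k} (h : trel a c) (h1 : trel u v ∨ trel v u)
    (hu : u = c ∨ prec c u) (hv : ¬ (v = c ∨ prec c v)) : u = c ∧ v = a := by
  rcases a with _ | ⟨j, i⟩ | l <;> rcases c with _ | ⟨j', i'⟩ | l' <;>
    rcases u with _ | ⟨j'', i''⟩ | l'' <;> rcases v with _ | ⟨j3, i3⟩ | l3 <;>
    simp_all [prec, trel, Fin.ext_iff] <;> omega

theorem root_prec {c v : TV b k} (h : trel none c) (h0 : br c ≠ none) (hv : br v = br c)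
    (hne : v ≠ c) : prec c v := by
  rcases c with _ | ⟨j', i'⟩ | l' <;>
    rcases v with _ | ⟨j'', i''⟩ | l'' <;> simp_all [prec, trel, br, Fin.ext_iff]
  try omega

theorem trel_mono_left {a c v : TV b k} (h : trel a c) (ha : a ≠ none) (hv : v ≠ a) :
    prec v c ↔ prec v a := by
  rcases a with _ | ⟨j, i⟩ | l <;> rcases c with _ | ⟨j', i'⟩ | l' <;>
    rcases v with _ | ⟨j'', i''⟩ | l'' <;> simp_all [prec, trel, Fin.ext_iff]
  omega

theorem trel_mono_right {a c v : TV b k} (h : trel a c) (ha : a ≠ none) (hv : v ≠ c) :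
    prec a v ↔ prec c v := by
  rcases a with _ | ⟨j, i⟩ | l <;> rcases c with _ | ⟨j', i'⟩ | l' <;>
    rcases v with _ | ⟨j'', i''⟩ | l'' <;> simp_all [prec, trel, Fin.ext_iff]
  omega

theorem trel_br {a c : TV b k} (h : trel a c) (ha : a ≠ none) : br a = br c :=
  prec_br (trel_prec h) ha

theorem walk_out {a c x u : TV b k} (h : trel a c) (p : (TGraph b k).Walk u x)
    (hu : u = c ∨ prec c u) (hx : ¬ (x = c ∨ prec c x)) :
    (TGraph b k).dist a x + 1 ≤ p.length := by
  induction p with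
  | nil => exact absurd hu hx
  | @cons u v x hadj p ih =>
    by_cases hv : v = c ∨ prec c v
    · have := ih hv hx
      simp; omega
    · have hadj' : u ≠ v ∧ (trel u v ∨ trel v u) := by simpa [TGraph] using hadj
      obtain ⟨rfl, rfl⟩ := trel_cross h hadj'.2 hu hv
      have := SimpleGraph.dist_le p
      simp; omega

theorem walk_in {a c x u : TV b k} (h : trel a c) (p : (TGraph b k).Walk u x)
    (hu : ¬ (u = c ∨ prec c u)) (hx : (x = c ∨ prec c x)) :
    (TGraph b k).dist c x + 1 ≤ p.length := by
  induction p with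
  | nil => exact absurd hx hu
  | @cons u v x hadj p ih =>
    by_cases hv : v = c ∨ prec c v
    · have hadj' : u ≠ v ∧ (trel u v ∨ trel v u) := by simpa [TGraph] using hadj
      obtain ⟨rfl, rfl⟩ := trel_cross h hadj'.2.symm hv hu
      have := SimpleGraph.dist_le p
      simp; omega
    · have := ih hv hx
      simp; omega

theorem trel_adj {a c : TV b k} (h : trel a c) : (TGraph b k).Adj a c := by
  have : a ≠ c := fun e => prec_irrefl c (by simpa [e] using trel_prec h)
  simp [TGraph, this, h]

theorem want_down {a c x : TV b k} (h : trel a c)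
    (hd : (TGraph b k).dist c x < (TGraph b k).dist a x) : x = c ∨ prec c x := by
  by_contra hx
  have hr : (TGraph b k).Reachable a x := by
    by_contra hr
    rw [SimpleGraph.dist_eq_zero_of_not_reachable hr] at hd
    omega
  have hr' : (TGraph b k).Reachable c x := (trel_adj h).symm.reachable.trans hr
  obtain ⟨p, hp⟩ := hr'.exists_walk_length_eq_dist
  have := walk_out h p (Or.inl rfl) hx
  omega

theorem want_up {a c x : TV b k} (h : trel a c)
    (hd : (TGraph b k).dist a x < (TGraph b k).dist c x) : ¬ (x = c ∨ prec c x) := by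
  intro hx
  have hr : (TGraph b k).Reachable c x := by
    by_contra hr
    rw [SimpleGraph.dist_eq_zero_of_not_reachable hr] at hd
    omega
  have hr' : (TGraph b k).Reachable a x := (trel_adj h).reachable.trans hr
  obtain ⟨p, hp⟩ := hr'.exists_walk_length_eq_dist
  have hac := trel_prec h
  have := walk_in h p (by
    rintro (rfl | h')
    · exact prec_irrefl _ hac
    · exact prec_irrefl _ (prec_trans hac h')) hx
  omega

/-- outward pointing vertices -/
def RT (φ : Equiv.Perm (TV b k)) (v : TV b k) : Prop := prec v (φ v)

/-- the other unhappy vertices -/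
def QT (φ : Equiv.Perm (TV b k)) (v : TV b k) : Prop := φ v ≠ v ∧ ¬ prec v (φ v)

structure Inv (ρ : Equiv.Perm (Fin b)) (φ : Equiv.Perm (TV b k)) (lam : TV b k → ℕ) : Prop where
  leaf : ∀ l, φ (some (Sum.inr l)) = some (Sum.inr l)
  lev : ∀ v, lam (φ v) = lam v
  qq : ∀ v w, QT φ v → QT φ w → prec v w → lam v < lam w
  rr : ∀ v w, RT φ v → RT φ w → v ≠ w → lam v ≤ lam w → prec w v ∧ lam v < lam w
  rq : ∀ v w, RT φ v → QT φ w → (lam w < lam v ∨ lam w = lam v ∧ v ≠ none) →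
    RT φ (φ w) ∧ φ w ≠ none
  cyc : ∀ v, QT φ v → RT φ (φ v) ∨ br (φ v) = (br v).map ρ
  rb : ∀ v w, RT φ v → RT φ w → lam v < lam w → v ≠ none →
    ∃ u, QT φ u ∧ lam u = lam w ∧ br u = br v

section
variable {ρ : Equiv.Perm (Fin b)} {φ : Equiv.Perm (TV b k)} {lam : TV b k → ℕ}

theorem RT.ne {v : TV b k} (h : RT φ v) : φ v ≠ v := by
  intro e
  unfold RT at h
  rw [e] at h
  exact prec_irrefl _ h

theorem RT.notQ {v : TV b k} (h : RT φ v) : ¬ QT φ v := fun h' => h'.2 h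

theorem RT_or_QT {v : TV b k} (h : φ v ≠ v) : RT φ v ∨ QT φ v := by
  unfold RT QT; tauto

theorem QT.ne_none {v : TV b k} (h : QT φ v) : v ≠ none := by
  rintro rfl
  exact h.2 (none_prec h.1)

theorem ne_next {v : TV b k} (h : φ v ≠ v) : φ (φ v) ≠ φ v := fun e => h (φ.injective e)

theorem Inv.r_next (I : Inv ρ φ lam) {v : TV b k} (h : RT φ v) : QT φ (φ v) := by
  rcases RT_or_QT (ne_next h.ne) with h' | h'
  · have := I.rr _ _ h h' h.ne.symm (I.lev v).ge
    have := I.lev v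
    omega
  · exact h'

theorem Inv.two (I : Inv ρ φ lam) {v : TV b k} (h : RT φ v) (h0 : v ≠ none) : φ (φ v) = v := by
  have h1 := I.rq v (φ v) h (I.r_next h) (Or.inr ⟨I.lev v, h0⟩)
  by_contra hne
  have h2 := I.rr _ _ h h1.1 (Ne.symm hne) (by rw [I.lev, I.lev])
  rw [I.lev, I.lev] at h2
  omega

theorem Inv.q_br (I : Inv ρ φ lam) {v : TV b k} (h : QT φ v) : br v ≠ none := by
  apply br_ne h.ne_none
  rintro l rfl
  exact h.1 (I.leaf l)

theorem Inv.q_unique (I : Inv ρ φ lam) {v w : TV b k} (hv : QT φ v) (hw : QT φ w)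
    (hb : br v = br w) (hl : lam v = lam w) : v = w := by
  by_contra hne
  rcases br_total hb (I.q_br hv) hne with h | h
  · have := I.qq _ _ hv hw h; omega
  · have := I.qq _ _ hw hv h; omega

theorem closed_all (hρ : ∀ i j, ρ.SameCycle i j) (S : Fin b → Prop) (hS : ∀ j, S j → S (ρ j))
    (i : Fin b) (hi : S i) (j : Fin b) : S j := by
  obtain ⟨n, -, hn⟩ := (hρ i j).exists_pow_eq'
  rw [← hn]
  clear hn
  induction n with
  | zero => simpa using hi
  | succ n ih => rw [pow_succ']; exact hS _ ih

/-- A level without outward vertices is present in all branches. -/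
theorem Inv.full (I : Inv ρ φ lam) (hρ : ∀ i j, ρ.SameCycle i j) {w : TV b k} (hw : QT φ w)
    (hno : ∀ v, RT φ v → lam v ≠ lam w) (j : Fin b) :
    ∃ u, QT φ u ∧ lam u = lam w ∧ br u = some j := by
  obtain ⟨i, hi⟩ := Option.ne_none_iff_exists'.1 (I.q_br hw)
  refine closed_all hρ (fun j => ∃ u, QT φ u ∧ lam u = lam w ∧ br u = some j) ?_ i
    ⟨w, hw, rfl, hi⟩ j
  rintro j ⟨u, hu, hl, hb⟩
  have hl' : lam (φ u) = lam w := by rw [I.lev, hl]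
  rcases I.cyc u hu with h | h
  · exact absurd hl' (hno _ h)
  · rcases RT_or_QT (ne_next hu.1) with h' | h'
    · exact absurd hl' (hno _ h')
    · exact ⟨φ u, h', hl', by rw [h, hb]; rfl⟩

/-- If the center is in a 2-cycle then this is its whole level. -/
theorem Inv.center_two (I : Inv ρ φ lam) (hρ : ∀ i j, ρ.SameCycle i j) (h0 : RT φ none)
    (h2 : φ (φ none) = none) {v : TV b k} (hv : QT φ v) (hl : lam v = lam none) :
    v = φ none := by
  by_contra hne
  have hw := I.r_next h0
  obtain ⟨i, hi⟩ := Option.ne_none_iff_exists'.1 (I.q_br hv)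
  obtain ⟨j, hj⟩ := Option.ne_none_iff_exists'.1 (I.q_br hw)
  obtain ⟨u, hu, hl', hne', hb⟩ := closed_all hρ
    (fun j => ∃ u, QT φ u ∧ lam u = lam none ∧ u ≠ φ none ∧ br u = some j) (by
      rintro j ⟨u, hu, hl, hne, hb⟩
      have hl' : lam (φ u) = lam none := by rw [I.lev, hl]
      have hR : ¬ RT φ (φ u) := by
        intro hR
        by_cases he : φ u = none
        · exact hne (φ.injective (by rw [he, h2]))
        · have := I.rr _ _ hR h0 he hl'.le
          omega
      have hQ : QT φ (φ u) := (RT_or_QT (ne_next hu.1)).resolve_left hR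
      refine ⟨φ u, hQ, hl', ?_, ?_⟩
      · intro e
        exact hu.ne_none (φ.injective e)
      · rw [(I.cyc u hu).resolve_left hR, hb]; rfl) i ⟨v, hv, hl, hne, hi⟩ j
  exact hne' (I.q_unique hu hw (by rw [hb, hj]) (by rw [hl', I.lev]))

theorem Inv.RT_symm (I : Inv ρ φ lam) (v : TV b k) : RT φ.symm v ↔ RT φ v := by
  by_cases hv : v = none
  · subst hv
    constructor
    · intro h
      exact none_prec (fun e => h.ne (by rw [Equiv.symm_apply_eq, e]))
    · intro h
      exact none_prec (fun e => h.ne (by rw [Equiv.symm_apply_eq] at e; exact e.symm))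
  constructor
  · intro h
    by_contra hR
    set w := φ.symm v with hw
    have hwv : φ w = v := by simp [hw]
    have hp : prec v w := h
    have hne : φ v ≠ v := by
      intro e
      exact h.ne (by rw [Equiv.symm_apply_eq, e])
    have hQ := (RT_or_QT hne).resolve_left hR
    have hQw : QT φ w := by
      refine ⟨?_, ?_⟩
      · rw [hwv]; intro e; rw [e] at hp; exact prec_irrefl _ hp
      · rw [hwv]; intro h'; exact prec_irrefl _ (prec_trans hp h')
    have := I.qq _ _ hQ hQw hp
    have := I.lev w
    rw [hwv] at this
    omega
  · intro h
    have := I.two h hv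
    have e : φ.symm v = φ v := by rw [Equiv.symm_apply_eq, this]
    unfold RT
    rw [e]
    exact h

theorem Inv.QT_symm (I : Inv ρ φ lam) (v : TV b k) : QT φ.symm v ↔ QT φ v := by
  have h := I.RT_symm v
  unfold RT at h
  unfold QT
  rw [h, Ne, Equiv.symm_apply_eq, eq_comm]

theorem Inv.inv (I : Inv ρ φ lam) : Inv ρ.symm φ.symm lam where
  leaf l := by rw [Equiv.symm_apply_eq, I.leaf]
  lev v := by rw [← I.lev (φ.symm v)]; simp
  qq v w hv hw := I.qq v w ((I.QT_symm _).1 hv) ((I.QT_symm _).1 hw)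
  rr v w hv hw := I.rr v w ((I.RT_symm _).1 hv) ((I.RT_symm _).1 hw)
  rq v w hv hw h := by
    rw [I.RT_symm] at *
    rw [I.QT_symm] at hw
    obtain ⟨h1, h2⟩ := I.rq v w hv hw h
    have h3 := φ.injective (I.two h1 h2)
    have : φ.symm w = φ w := by rw [Equiv.symm_apply_eq, h3]
    rw [this]
    exact ⟨h1, h2⟩
  cyc v hv := by
    rw [I.RT_symm] at *
    rw [I.QT_symm] at hv
    by_cases hR : RT φ (φ.symm v)
    · exact Or.inl hR
    · right
      have hne : φ (φ.symm v) ≠ φ.symm v := by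
        intro e
        rw [Equiv.apply_symm_apply] at e
        exact hv.1 ((Equiv.symm_apply_eq _).1 e.symm).symm
      have hQ := (RT_or_QT hne).resolve_left hR
      have h1 := I.cyc _ hQ
      simp only [Equiv.apply_symm_apply] at h1
      have h2 := h1.resolve_left (fun h => h.notQ hv)
      rw [h2]
      cases br (φ.symm v) <;> simp
  rb v w hv hw hl h0 := by
    obtain ⟨u, hu, h⟩ := I.rb v w ((I.RT_symm _).1 hv) ((I.RT_symm _).1 hw) hl h0
    exact ⟨u, (I.QT_symm _).2 hu, h⟩

/-- A happy swap between parent `a` and child `c` makes `c` happy. -/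
theorem Inv.happy_eq (I : Inv ρ φ lam) {a c : TV b k} (h : trel a c)
    (ha : φ a = c ∨ prec c (φ a)) (hc : ¬ (φ c = c ∨ prec c (φ c))) : φ a = c := by
  by_contra hne
  have hp := ha.resolve_left hne
  have hac := trel_prec h
  have hRa : RT φ a := prec_trans hac hp
  have hQc : QT φ c := by unfold QT; tauto
  have h1 := I.qq _ _ hQc (I.r_next hRa) hp
  rw [I.lev] at h1
  obtain ⟨h2, h3⟩ := I.rq a c hRa hQc (Or.inl h1)
  have h4 := φ.injective (I.two h2 h3)
  have h5 := I.rr (φ c) a h2 hRa (by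
    intro e
    have := I.lev c
    rw [e] at this; omega) (by rw [I.lev]; omega)
  have h6 : prec (φ c) c := by
    have := h2
    unfold RT at this
    rwa [h4] at this
  exact trel_between h h5.1 h6

theorem Inv.happy (I : Inv ρ φ lam) {a c : TV b k} (h : trel a c)
    (ha : φ a = c ∨ prec c (φ a)) (hc : ¬ (φ c = c ∨ prec c (φ c))) :
    Inv ρ ((Equiv.swap a c).trans φ) lam ∧
      (Equiv.Perm.support ((Equiv.swap a c).trans φ)).card + 1 ≤ φ.support.card := by
  have hac := I.happy_eq h ha hc
  have hpac := trel_prec h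
  have hRa : RT φ a := by unfold RT; rw [hac]; exact hpac
  have hQc : QT φ c := by unfold QT; tauto
  have hne : a ≠ c := by rintro rfl; exact prec_irrefl _ hpac
  set ψ := (Equiv.swap a c).trans φ with hψ
  have e1 : ψ a = φ c := by simp [hψ]
  have e2 : ψ c = c := by simp [hψ, hac]
  have e3 : ∀ v, v ≠ a → v ≠ c → ψ v = φ v := by
    intro v h1 h2
    simp [hψ, Equiv.swap_apply_of_ne_of_ne h1 h2]
  have hfix : a ≠ none → φ c = a := by
    intro h0
    have := I.two hRa h0
    rwa [hac] at this
  -- types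
  have hRc : ¬ RT ψ c := fun h => h.ne e2
  have hQc' : ¬ QT ψ c := fun h => h.1 e2
  have hQa' : ¬ QT ψ a := by
    intro h
    by_cases h0 : a = none
    · exact h.ne_none h0
    · exact h.1 (by rw [e1, hfix h0])
  have hRa' : φ c ≠ a → RT ψ a := by
    intro hh
    have h0 : a = none := by
      by_contra h0
      exact hh (hfix h0)
    unfold RT
    rw [e1]
    subst h0
    exact none_prec hh
  have tR : ∀ v, RT ψ v → RT φ v := by
    intro v hv
    by_cases h1 : v = a
    · subst h1; exact hRa
    by_cases h2 : v = c
    · subst h2; exact absurd hv hRc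
    · unfold RT at *; rwa [← e3 v h1 h2]
  have tQ : ∀ v, QT ψ v → QT φ v ∧ v ≠ a ∧ v ≠ c := by
    intro v hv
    have h1 : v ≠ a := by rintro rfl; exact hQa' hv
    have h2 : v ≠ c := by rintro rfl; exact hQc' hv
    refine ⟨?_, h1, h2⟩
    unfold QT at *; rwa [← e3 v h1 h2]
  have tR' : ∀ v, RT φ v → v ≠ a → RT ψ v := by
    intro v hv h1
    have h2 : v ≠ c := by rintro rfl; exact hv.notQ hQc
    unfold RT at *; rwa [e3 v h1 h2]
  have tQ' : ∀ v, QT φ v → v ≠ c → QT ψ v := by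
    intro v hv h2
    have h1 : v ≠ a := by rintro rfl; exact hRa.notQ hv
    unfold QT at *; rwa [e3 v h1 h2]
  refine ⟨⟨?_, ?_, ?_, ?_, ?_, ?_, ?_⟩, ?_⟩
  · intro l
    rw [e3, I.leaf]
    · intro e; exact hRa.ne (by rw [← e, I.leaf])
    · intro e; exact hQc.1 (by rw [← e, I.leaf])
  · intro v
    by_cases h1 : v = a
    · rw [h1, e1, I.lev, ← hac, I.lev]
    by_cases h2 : v = c
    · rw [h2, e2]
    · rw [e3 v h1 h2, I.lev]
  · intro v w hv hw
    exact I.qq v w (tQ v hv).1 (tQ w hw).1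
  · intro v w hv hw
    exact I.rr v w (tR v hv) (tR w hw)
  · intro v w hv hw hl
    obtain ⟨hw, h1, h2⟩ := tQ w hw
    obtain ⟨h3, h4⟩ := I.rq v w (tR v hv) hw hl
    rw [e3 w h1 h2]
    refine ⟨tR' _ h3 ?_, h4⟩
    intro e
    rw [e] at h4
    exact h2 (φ.injective (by rw [e, hfix h4]))
  · intro v hv
    obtain ⟨hv, h1, h2⟩ := tQ v hv
    rw [e3 v h1 h2]
    rcases I.cyc v hv with h3 | h3
    · left
      by_cases e : φ v = a
      · rw [e]
        apply hRa'
        intro e'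
        exact h2 (φ.injective (by rw [e, e']))
      · exact tR' _ h3 e
    · exact Or.inr h3
  · intro v w hv hw hl h0
    obtain ⟨u, hu, h1, h2⟩ := I.rb v w (tR v hv) (tR w hw) hl h0
    refine ⟨u, tQ' u hu ?_, h1, h2⟩
    rintro rfl
    have hla : lam u = lam a := by rw [← hac, I.lev]
    have hwa : w = a := by
      by_contra hwa
      have := I.rr _ _ (tR w hw) hRa hwa (by omega)
      omega
    subst hwa
    have hw0 : w = none := by
      by_contra h0
      apply hw.ne
      rw [e1, hfix h0]
    subst hw0
    have hvu : v ≠ u := by rintro rfl; omega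
    have h5 := root_prec h (I.q_br hu) h2.symm hvu
    have h6 := I.qq _ _ hu (I.r_next (tR v hv)) (prec_trans h5 (tR v hv))
    rw [I.lev] at h6
    omega
  · have hsub : Equiv.Perm.support ψ ⊂ φ.support := by
      rw [Finset.ssubset_iff]
      refine ⟨c, ?_, ?_⟩
      · rw [Equiv.Perm.mem_support, e2]; simp
      · intro v hv
        rw [Finset.mem_insert] at hv
        rw [Equiv.Perm.mem_support]
        rcases hv with rfl | hv
        · exact hQc.1
        · rw [Equiv.Perm.mem_support] at hv
          by_cases h1 : v = a
          · rw [h1]; exact hRa.ne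
          by_cases h2 : v = c
          · rw [h2]; exact hQc.1
          rwa [← e3 v h1 h2]
    exact Finset.card_lt_card hsub

/-- Shoves within a branch. -/
theorem Inv.shove_branch (I : Inv ρ φ lam) {a c : TV b k} (h : trel a c ∨ trel c a)
    (ha0 : a ≠ none) (hc0 : c ≠ none) (hc : φ c = c) :
    Inv ρ (((Equiv.swap a c).trans φ).trans (Equiv.swap a c)) (lam ∘ Equiv.swap a c) := by
  set s := Equiv.swap a c with hs
  set ψ := (s.trans φ).trans s with hψ
  have hss : ∀ v, s (s v) = v := by intro v; simp [hs]
  have hsurj : ∀ v, ∃ u, v = s u := fun v => ⟨s v, (hss v).symm⟩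
  have e : ∀ v, ψ (s v) = s (φ v) := by intro v; simp [hψ, hss]
  have hbr : ∀ v, br (s v) = br v := by
    intro v
    have hab : br a = br c := by
      rcases h with h | h
      · exact trel_br h ha0
      · exact (trel_br h hc0).symm
    by_cases h1 : v = a
    · simp [h1, hs, hab]
    by_cases h2 : v = c
    · simp [h2, hs, hab]
    · simp [hs, Equiv.swap_apply_of_ne_of_ne h1 h2]
  have hnone : ∀ v, s v = none ↔ v = none := by
    intro v
    have : s none = none := Equiv.swap_apply_of_ne_of_ne ha0.symm hc0.symm
    constructor
    · intro h; apply s.injective; rw [h, this]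
    · rintro rfl; exact this
  have hmono : ∀ v w, v ≠ c → w ≠ c → (prec (s v) (s w) ↔ prec v w) := by
    intro v w hv hw
    by_cases h1 : v = a
    · by_cases h2 : w = a
      · simp [h1, h2, prec_irrefl]
      · rw [h1, show s a = c by simp [hs], show s w = w from Equiv.swap_apply_of_ne_of_ne h2 hw]
        rcases h with h | h
        · exact (trel_mono_right h ha0 hw).symm
        · exact (trel_mono_right h hc0 h2)
    · by_cases h2 : w = a
      · rw [h2, show s a = c by simp [hs], show s v = v from Equiv.swap_apply_of_ne_of_ne h1 hv]
        rcases h with h | h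
        · exact trel_mono_left h ha0 h1
        · exact (trel_mono_left h hc0 hv).symm
      · rw [show s w = w from Equiv.swap_apply_of_ne_of_ne h2 hw,
          show s v = v from Equiv.swap_apply_of_ne_of_ne h1 hv]
  have hfc : ∀ v, v ≠ c → φ v ≠ c := by
    intro v hv e
    exact hv (φ.injective (by rw [e, hc]))
  have tR : ∀ v, RT ψ (s v) ↔ RT φ v := by
    intro v
    unfold RT
    rw [e]
    by_cases hv : v = c
    · simp [hv, hc, prec_irrefl]
    · exact hmono _ _ hv (hfc v hv)
  have tQ : ∀ v, QT ψ (s v) ↔ QT φ v := by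
    intro v
    have := tR v
    unfold RT at this
    unfold QT
    rw [this, e, Ne, s.injective.eq_iff]
  have hl : ∀ v, (lam ∘ s) (s v) = lam v := by intro v; simp [hss]
  refine ⟨?_, ?_, ?_, ?_, ?_, ?_, ?_⟩
  · intro l
    have h1 : s (some (Sum.inr l)) = some (Sum.inr l) := by
      apply Equiv.swap_apply_of_ne_of_ne
      · rintro rfl
        rcases h with h | h
        · rcases c with _ | ⟨j, i⟩ | l' <;> simp [trel] at h
        · rcases c with _ | ⟨j, i⟩ | l' <;> simp [trel] at h hc0
      · rintro rfl
        rcases h with h | h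
        · rcases a with _ | ⟨j, i⟩ | l' <;> simp [trel] at h ha0
        · rcases a with _ | ⟨j, i⟩ | l' <;> simp [trel] at h
    have := e (some (Sum.inr l))
    rwa [I.leaf, h1] at this
  · intro v
    obtain ⟨v, rfl⟩ := hsurj v
    rw [e, hl, hl, I.lev]
  · intro v w
    obtain ⟨v, rfl⟩ := hsurj v
    obtain ⟨w, rfl⟩ := hsurj w
    rw [tQ, tQ, hl, hl]
    intro hv hw
    rw [hmono]
    · exact I.qq v w hv hw
    · rintro rfl; exact hv.1 hc
    · rintro rfl; exact hw.1 hc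
  · intro v w
    obtain ⟨v, rfl⟩ := hsurj v
    obtain ⟨w, rfl⟩ := hsurj w
    rw [tR, tR, hl, hl, s.injective.ne_iff]
    intro hv hw
    rw [hmono]
    · exact I.rr v w hv hw
    · rintro rfl; exact hw.ne hc
    · rintro rfl; exact hv.ne hc
  · intro v w
    obtain ⟨v, rfl⟩ := hsurj v
    obtain ⟨w, rfl⟩ := hsurj w
    rw [tR, tQ, hl, hl, e, tR, Ne, Ne, hnone, hnone]
    exact I.rq v w
  · intro v
    obtain ⟨v, rfl⟩ := hsurj v
    rw [tQ, e, tR, hbr, hbr]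
    exact I.cyc v
  · intro v w
    obtain ⟨v, rfl⟩ := hsurj v
    obtain ⟨w, rfl⟩ := hsurj w
    rw [tR, tR, hl, hl, Ne, hnone, hbr]
    intro hv hw h1 h2
    obtain ⟨u, hu, h3, h4⟩ := I.rb v w hv hw h1 h2
    exact ⟨s u, (tQ u).2 hu, by rw [hl, h3], by rw [hbr, h4]⟩

/-- Shove into the center. -/
theorem Inv.shove_in (I : Inv ρ φ lam) (hρ : ∀ i j, ρ.SameCycle i j) {a : TV b k}
    (h : trel none a) (h0 : φ none = none) (ha : ¬ (φ a = a ∨ prec a (φ a))) :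
    Inv ρ (((Equiv.swap a none).trans φ).trans (Equiv.swap a none))
      (lam ∘ Equiv.swap a none) := by
  have hQa : QT φ a := by unfold QT; tauto
  have ha0 := hQa.ne_none
  have hba := I.q_br hQa
  set s := Equiv.swap a none with hs
  set ψ := (s.trans φ).trans s with hψ
  have s1 : s a = none := by simp [hs]
  have s2 : s none = a := by simp [hs]
  have s3 : ∀ v, v ≠ a → v ≠ none → s v = v := fun v => Equiv.swap_apply_of_ne_of_ne
  have hfn : ∀ v, v ≠ none → φ v ≠ none := by
    intro v hv e
    exact hv (φ.injective (by rw [e, h0]))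
  have e1 : ψ a = a := by simp [hψ, s1, h0, s2]
  have e2 : ψ none = φ a := by
    simp only [hψ, Equiv.trans_apply, s2]
    exact s3 _ hQa.1 (hfn a ha0)
  have e3 : ∀ v, v ≠ a → v ≠ none → ψ v = s (φ v) := by
    intro v h1 h2
    simp only [hψ, Equiv.trans_apply, s3 v h1 h2]
  have e4 : ∀ v, v ≠ a → v ≠ none → φ v ≠ a → ψ v = φ v := by
    intro v h1 h2 h3
    rw [e3 v h1 h2, s3 _ h3 (hfn v h2)]
  have e5 : ∀ v, v ≠ a → v ≠ none → φ v = a → ψ v = none := by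
    intro v h1 h2 h3
    rw [e3 v h1 h2, h3, s1]
  have hna : ∀ v, v ≠ none → ¬ prec v a := fun v hv hp => trel_between h (none_prec hv) hp
  have tR : ∀ v, v ≠ a → v ≠ none → (RT ψ v ↔ RT φ v) := by
    intro v h1 h2
    unfold RT
    by_cases h3 : φ v = a
    · rw [e5 v h1 h2 h3, h3]
      exact iff_of_false (prec_none v) (hna v h2)
    · rw [e4 v h1 h2 h3]
  have tQ : ∀ v, v ≠ a → v ≠ none → (QT ψ v ↔ QT φ v) := by
    intro v h1 h2
    have := tR v h1 h2
    unfold RT at this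
    unfold QT
    rw [this]
    by_cases h3 : φ v = a
    · rw [e5 v h1 h2 h3, h3]
      simp [h1.symm, h2.symm]
    · rw [e4 v h1 h2 h3]
  have hRn : RT ψ none := by
    unfold RT; rw [e2]; exact none_prec (hfn a ha0)
  have hRn' : ¬ RT φ none := fun h => h.ne h0
  have fQ : ∀ v, QT ψ v → QT φ v ∧ v ≠ a ∧ v ≠ none := by
    intro v hv
    have h1 : v ≠ a := by rintro rfl; exact hv.1 e1
    exact ⟨(tQ v h1 hv.ne_none).1 hv, h1, hv.ne_none⟩
  have fR : ∀ v, RT ψ v → v = none ∨ (RT φ v ∧ v ≠ a ∧ v ≠ none) := by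
    intro v hv
    by_cases h2 : v = none
    · exact Or.inl h2
    have h1 : v ≠ a := by rintro rfl; exact hv.ne e1
    exact Or.inr ⟨(tR v h1 h2).1 hv, h1, h2⟩
  have gR : ∀ v, RT φ v → RT ψ v ∧ v ≠ a ∧ v ≠ none := by
    intro v hv
    have h1 : v ≠ a := by rintro rfl; exact hv.notQ hQa
    have h2 : v ≠ none := by rintro rfl; exact hRn' hv
    exact ⟨(tR v h1 h2).2 hv, h1, h2⟩
  -- all outward vertices have smaller level
  have hlow : ∀ v, RT φ v → lam v < lam a := by
    intro v hv
    obtain ⟨-, h1, h2⟩ := gR v hv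
    by_contra hlt
    obtain ⟨h3, h4⟩ := I.rq v a hv hQa (by
      rcases Nat.lt_or_ge (lam a) (lam v) with h | h
      · exact Or.inl h
      · exact Or.inr ⟨by omega, h2⟩)
    have h5 := φ.injective (I.two h3 h4)
    have h6 : prec (φ a) (φ (φ a)) := h3
    rw [h5] at h6
    exact hna _ h4 h6
  have hl : ∀ v, v ≠ a → v ≠ none → (lam ∘ s) v = lam v := by
    intro v h1 h2
    simp [s3 v h1 h2]
  have hln : (lam ∘ s) none = lam a := by simp [s2]
  have hrootR : ∀ v, RT φ v → br v ≠ br a := by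
    intro v hv hb
    have h1 := root_prec h hba hb (gR v hv).2.1
    have h2 := I.qq _ _ hQa (I.r_next hv) (prec_trans h1 hv)
    rw [I.lev] at h2
    have := hlow v hv
    omega
  refine ⟨?_, ?_, ?_, ?_, ?_, ?_, ?_⟩
  · intro l
    have h1 : some (Sum.inr l) ≠ a := by
      intro e; exact hQa.1 (by rw [← e, I.leaf])
    rw [e4 _ h1 (by simp) (by rw [I.leaf]; exact h1), I.leaf]
  · intro v
    have hss : ∀ v, s (s v) = v := by intro v; simp [hs]
    simp only [Function.comp, hψ, Equiv.trans_apply, hss, I.lev]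
  · intro v w hv hw hp
    obtain ⟨kv, h1, h2⟩ := fQ v hv
    obtain ⟨kw, h3, h4⟩ := fQ w hw
    rw [hl v h1 h2, hl w h3 h4]
    exact I.qq v w kv kw hp
  · intro v w hv hw hne hlam
    rcases fR v hv with rfl | ⟨kv, h1, h2⟩ <;> rcases fR w hw with rfl | ⟨kw, h3, h4⟩
    · exact absurd rfl hne
    · rw [hln, hl w h3 h4] at hlam
      have := hlow w kw
      omega
    · rw [hln, hl v h1 h2]
      exact ⟨none_prec h2, hlow v kv⟩
    · rw [hl v h1 h2, hl w h3 h4] at *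
      exact I.rr v w kv kw hne hlam
  · intro v w hv hw hlam
    obtain ⟨kw, h3, h4⟩ := fQ w hw
    rw [hl w h3 h4] at hlam
    have key : RT φ (φ w) ∧ φ w ≠ none := by
      rcases fR v hv with rfl | ⟨kv, h1, h2⟩
      · rw [hln] at hlam
        have hlt : lam w < lam a := by
          rcases hlam with h | h
          · exact h
          · exact absurd rfl h.2
        by_cases hex : ∃ v, RT φ v ∧ lam v = lam w
        · obtain ⟨v, kv, hvl⟩ := hex
          exact I.rq v w kv kw (Or.inr ⟨hvl.symm, (gR v kv).2.2⟩)
        · push Not at hex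
          obtain ⟨j, hj⟩ := Option.ne_none_iff_exists'.1 hba
          obtain ⟨u, hu, hul, hub⟩ := I.full hρ kw hex j
          have hua : u ≠ a := by rintro rfl; omega
          have h5 := root_prec h hba (by rw [hub, hj]) hua
          have := I.qq _ _ hQa hu h5
          omega
      · rw [hl v h1 h2] at hlam
        exact I.rq v w kv kw hlam
    obtain ⟨h5, h6, h7⟩ := gR _ key.1
    rw [e4 w h3 h4 h6]
    exact ⟨h5, h7⟩
  · intro v hv
    obtain ⟨kv, h1, h2⟩ := fQ v hv
    by_cases h3 : φ v = a
    · left; rw [e5 v h1 h2 h3]; exact hRn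
    · rw [e4 v h1 h2 h3]
      rcases I.cyc v kv with h4 | h4
      · exact Or.inl (gR _ h4).1
      · exact Or.inr h4
  · intro v w hv hw hlam hv0
    obtain ⟨kv, h1, h2⟩ := (fR v hv).resolve_left hv0
    rw [hl v h1 h2] at hlam
    rcases fR w hw with rfl | ⟨kw, h3, h4⟩
    · rw [hln] at *
      have hbv := prec_br_ne kv h2
      obtain ⟨j, hj⟩ := Option.ne_none_iff_exists'.1 hbv
      obtain ⟨u, hu, hul, hub⟩ := I.full hρ hQa (fun v kv => (hlow v kv).ne) j
      have hua : u ≠ a := by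
        rintro rfl
        exact hrootR v kv (by rw [hub, hj])
      exact ⟨u, (tQ u hua hu.ne_none).2 hu, by rw [hl u hua hu.ne_none, hul], by rw [hub, hj]⟩
    · rw [hl w h3 h4] at *
      obtain ⟨u, hu, hul, hub⟩ := I.rb v w kv kw hlam hv0
      have hua : u ≠ a := by
        rintro rfl
        have := hlow w kw
        omega
      exact ⟨u, (tQ u hua hu.ne_none).2 hu, by rw [hl u hua hu.ne_none, hul], hub⟩

/-- Shove out of the center. -/
theorem Inv.shove_out (I : Inv ρ φ lam) (hρ : ∀ i j, ρ.SameCycle i j) {c : TV b k}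
    (h : trel none c) (hc : φ c = c) (ha : φ none = c ∨ prec c (φ none))
    (ha' : φ.symm none = c ∨ prec c (φ.symm none)) :
    Inv ρ (((Equiv.swap none c).trans φ).trans (Equiv.swap none c))
      (lam ∘ Equiv.swap none c) := by
  have hc0 : c ≠ none := by rintro rfl; simp [trel] at h
  have hnc : φ none ≠ c := fun e => hc0 (φ.injective (by rw [e, hc]))
  have hcw : prec c (φ none) := ha.resolve_left hnc
  have hnc' : φ.symm none ≠ c := by
    intro e
    rw [Equiv.symm_apply_eq, hc] at e
    exact hc0 e.symm
  have hcu : prec c (φ.symm none) := ha'.resolve_left hnc'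
  have hRn : RT φ none := prec_trans (none_prec hc0) hcw
  have hQw := I.r_next hRn
  obtain ⟨u, hu⟩ : ∃ u, u = φ.symm none := ⟨_, rfl⟩
  rw [← hu] at hcu
  have hun : φ u = none := by simp [hu]
  have hu0 : u ≠ none := by rintro rfl; exact prec_none _ hcu
  have hlu : lam none = lam u := by rw [← hun, I.lev]
  have hQu : QT φ u := by
    refine (RT_or_QT (by rw [hun]; exact hu0.symm)).resolve_left ?_
    intro hR
    have := I.rr _ _ hRn hR hu0.symm hlu.le
    omega
  have huw : u = φ none :=
    I.q_unique hQu hQw (by rw [← prec_br hcu hc0, ← prec_br hcw hc0]) (by rw [I.lev, hlu])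
  have h2 : φ (φ none) = none := by rw [← huw, hun]
  obtain ⟨w, kw⟩ : ∃ w, w = φ none := ⟨_, rfl⟩
  rw [← kw] at hcw hQw h2
  have hwc : w ≠ c := by rw [kw]; exact hnc
  have hw0 := hQw.ne_none
  have hlw : lam w = lam none := by rw [kw, I.lev]
  have huniq : ∀ v, QT φ v → lam v = lam none → v = w := by
    intro v kv hl
    rw [kw]
    exact I.center_two hρ hRn (by rw [← kw, h2]) kv hl
  clear huw hQu hlu hu0 hun hcu hu hnc' ha ha' hnc
  set s := Equiv.swap none c with hs
  set ψ := (s.trans φ).trans s with hψ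
  have s1 : s none = c := by simp [hs]
  have s2 : s c = none := by simp [hs]
  have s3 : ∀ v, v ≠ none → v ≠ c → s v = v := fun v => Equiv.swap_apply_of_ne_of_ne
  have e1 : ψ none = none := by simp [hψ, s1, hc, s2]
  have e2 : ψ c = w := by
    simp only [hψ, Equiv.trans_apply, s2, ← kw]
    exact s3 _ hw0 hwc
  have e3 : ψ w = c := by
    simp only [hψ, Equiv.trans_apply, s3 w hw0 hwc, h2, s1]
  have e4 : ∀ v, v ≠ none → v ≠ c → v ≠ w → ψ v = φ v := by
    intro v h1 h3 h4
    simp only [hψ, Equiv.trans_apply, s3 v h1 h3]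
    apply s3
    · intro e; exact h4 (φ.injective (by rw [e, h2]))
    · intro e; exact h3 (φ.injective (by rw [e, hc]))
  have hRc : RT ψ c := by unfold RT; rw [e2]; exact hcw
  have hQw' : QT ψ w := by
    refine ⟨by rw [e3]; exact hwc.symm, ?_⟩
    rw [e3]; intro h'; exact prec_irrefl _ (prec_trans hcw h')
  have fQ : ∀ v, QT ψ v → QT φ v ∧ v ≠ c ∧ v ≠ none := by
    intro v kv
    have h1 := kv.ne_none
    have h3 : v ≠ c := by rintro rfl; exact hRc.notQ kv
    by_cases h4 : v = w
    · subst h4; exact ⟨hQw, h3, h1⟩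
    · refine ⟨?_, h3, h1⟩
      unfold QT at *; rwa [← e4 v h1 h3 h4]
  have gQ : ∀ v, QT φ v → QT ψ v ∧ v ≠ c ∧ v ≠ none := by
    intro v kv
    have h1 := kv.ne_none
    have h3 : v ≠ c := by rintro rfl; exact kv.1 hc
    by_cases h4 : v = w
    · subst h4; exact ⟨hQw', h3, h1⟩
    · refine ⟨?_, h3, h1⟩
      unfold QT at *; rwa [e4 v h1 h3 h4]
  have fR : ∀ v, RT ψ v → v = c ∨ (RT φ v ∧ v ≠ c ∧ v ≠ none) := by
    intro v kv
    by_cases h3 : v = c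
    · exact Or.inl h3
    have h1 : v ≠ none := by rintro rfl; exact kv.ne e1
    have h4 : v ≠ w := by rintro rfl; exact kv.notQ hQw'
    refine Or.inr ⟨?_, h3, h1⟩
    unfold RT at *; rwa [← e4 v h1 h3 h4]
  have gR : ∀ v, RT φ v → v ≠ none → RT ψ v ∧ v ≠ c := by
    intro v kv h1
    have h3 : v ≠ c := by rintro rfl; exact kv.ne hc
    have h4 : v ≠ w := by rintro rfl; exact kv.notQ hQw
    refine ⟨?_, h3⟩
    unfold RT at *; rwa [e4 v h1 h3 h4]
  have hlow : ∀ v, RT φ v → v ≠ none → lam v < lam none := by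
    intro v kv h1
    by_contra hlt
    exact prec_none _ (I.rr _ _ hRn kv h1.symm (by omega)).1
  have hl : ∀ v, v ≠ c → v ≠ none → (lam ∘ s) v = lam v := by
    intro v h1 h2
    simp [s3 v h2 h1]
  have hlc : (lam ∘ s) c = lam none := by simp [s2]
  refine ⟨?_, ?_, ?_, ?_, ?_, ?_, ?_⟩
  · intro l
    have h1 : some (Sum.inr l) ≠ c := by
      rintro rfl
      rcases w with _ | ⟨j, i⟩ | l' <;> simp [prec] at hcw
    rw [e4 _ (by simp) h1 (by rintro rfl; exact hQw.1 (I.leaf l)), I.leaf]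
  · intro v
    have hss : ∀ v, s (s v) = v := by intro v; simp [hs]
    simp only [Function.comp, hψ, Equiv.trans_apply, hss, I.lev]
  · intro v w hv hw hp
    obtain ⟨kv, h1, h2⟩ := fQ v hv
    obtain ⟨kw, h3, h4⟩ := fQ w hw
    rw [hl v h1 h2, hl w h3 h4]
    exact I.qq v w kv kw hp
  · intro v x hv hx hne hlam
    rcases fR v hv with rfl | ⟨kv, h1, h2⟩ <;> rcases fR x hx with rfl | ⟨kx, h3, h4⟩
    · exact absurd rfl hne
    · rw [hlc, hl x h3 h4] at hlam
      have := hlow x kx h4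
      omega
    · rw [hlc, hl v h1 h2]
      refine ⟨?_, hlow v kv h2⟩
      obtain ⟨u, hu, hul, hub⟩ := I.rb v none kv hRn (hlow v kv h2) h2
      have := huniq u hu hul
      subst this
      exact root_prec h (prec_br_ne hcw hc0) (by rw [← hub, prec_br hcw hc0]) h1
    · rw [hl v h1 h2, hl x h3 h4] at *
      exact I.rr v x kv kx hne hlam
  · intro v x hv hx hlam
    obtain ⟨kx, h3, h4⟩ := fQ x hx
    rw [hl x h3 h4] at hlam
    by_cases hxw : x = w
    · rw [hxw, e3]; exact ⟨hRc, hc0⟩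
    have key : RT φ (φ x) ∧ φ x ≠ none := by
      rcases fR v hv with rfl | ⟨kv, h1, h2⟩
      · rw [hlc] at hlam
        refine I.rq none x hRn kx (Or.inl ?_)
        rcases hlam with h | h
        · exact h
        · exact absurd (huniq x kx h.1) hxw
      · rw [hl v h1 h2] at hlam
        exact I.rq v x kv kx hlam
    rw [e4 x h4 h3 hxw]
    exact ⟨(gR _ key.1 key.2).1, key.2⟩
  · intro v hv
    obtain ⟨kv, h1, h3⟩ := fQ v hv
    by_cases hvw : v = w
    · left; rw [hvw, e3]; exact hRc
    · rw [e4 v h3 h1 hvw]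
      rcases I.cyc v kv with h4 | h4
      · left
        refine (gR _ h4 ?_).1
        intro e; exact hvw (φ.injective (by rw [e, h2]))
      · exact Or.inr h4
  · intro v x hv hx hlam hv0
    rcases fR v hv with rfl | ⟨kv, h1, h2⟩
    · rw [hlc] at hlam
      rcases fR x hx with rfl | ⟨kx, h3, h4⟩
      · rw [hlc] at hlam; omega
      · rw [hl x h3 h4] at hlam
        have := hlow x kx h4
        omega
    rw [hl v h1 h2] at hlam
    have : ∃ u, QT φ u ∧ lam u = (lam ∘ s) x ∧ br u = br v := by
      rcases fR x hx with rfl | ⟨kx, h3, h4⟩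
      · rw [hlc] at *
        exact I.rb v none kv hRn hlam h2
      · rw [hl x h3 h4] at *
        exact I.rb v x kv kx hlam h2
    obtain ⟨u, hu, hul, hub⟩ := this
    obtain ⟨h5, h6, h7⟩ := gQ u hu
    exact ⟨u, h5, by rw [hl u h6 h7, hul], hub⟩

end

theorem Inv.init : Inv (finRotate b) (piT b k)
    (fun v => match v with | some (Sum.inl (_, i)) => i.val | _ => 0) := by
  have hR : ∀ v : TV b k, ¬ RT (piT b k) v := by
    intro v
    rcases v with _ | ⟨j, i⟩ | l <;> simp [RT, piT, prec]
  have hx : ∀ v : TV b k, br (piT b k v) = (br v).map (finRotate b) := by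
    intro v
    rcases v with _ | ⟨j, i⟩ | l <;> simp [piT, br]
  refine ⟨?_, ?_, ?_, fun v _ h => absurd h (hR v), fun v _ h => absurd h (hR v),
    fun v _ => Or.inr (hx v), fun v _ h => absurd h (hR v)⟩
  · intro l; simp [piT]
  · intro v
    rcases v with _ | ⟨j, i⟩ | l <;> simp [piT]
  · intro v w hv hw hp
    rcases v with _ | ⟨j, i⟩ | l
    · exact absurd rfl hv.ne_none
    · rcases w with _ | ⟨j', i'⟩ | l' <;> simp_all [prec]
    · simp [prec] at hp

theorem init_card : (piT b k).support.card ≤ b * k := by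
  have : (piT b k).support ⊆
      (Finset.univ : Finset (Fin b × Fin k)).image (fun x => some (Sum.inl x)) := by
    intro v hv
    rw [Equiv.Perm.mem_support] at hv
    rcases v with _ | ⟨j, i⟩ | l
    · simp [piT] at hv
    · simp
    · simp [piT] at hv
  calc _ ≤ _ := Finset.card_le_card this
    _ ≤ _ := Finset.card_image_le
    _ = b * k := by simp

theorem rot_same (i j : Fin b) : (finRotate b).SameCycle i j := by
  match b, i, j with
  | 0, i, _ => exact i.elim0
  | 1, i, j => rw [Subsingleton.elim i j]
  | n + 2, i, j =>
    apply (isCycle_finRotate (n := n)).sameCycle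
    · rw [← Equiv.Perm.mem_support, support_finRotate]; simp
    · rw [← Equiv.Perm.mem_support, support_finRotate]; simp

/-- The permutation of the vertices of a state. -/
def phi (st : Equiv.Perm (TV b k) × Equiv.Perm (TV b k)) : Equiv.Perm (TV b k) :=
  st.1.symm.trans st.2

theorem adj_trel {a c : TV b k} (h : (TGraph b k).Adj a c) : trel a c ∨ trel c a := by
  have : a ≠ c ∧ (trel a c ∨ trel c a) := by simpa [TGraph] using h
  exact this.2

theorem step_happy {ρ : Equiv.Perm (Fin b)} {φ : Equiv.Perm (TV b k)} {lam : TV b k → ℕ}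
    (I : Inv ρ φ lam) {a c : TV b k}
    (h : trel a c ∨ trel c a)
    (h1 : (TGraph b k).dist c (φ a) < (TGraph b k).dist a (φ a))
    (h2 : (TGraph b k).dist a (φ c) < (TGraph b k).dist c (φ c)) :
    Inv ρ ((Equiv.swap a c).trans φ) lam ∧
      (Equiv.Perm.support ((Equiv.swap a c).trans φ)).card + 1 ≤ φ.support.card := by
  rcases h with h | h
  · exact I.happy h (want_down h h1) (want_up h h2)
  · rw [Equiv.swap_comm]
    exact I.happy h (want_down h h2) (want_up h h1)

theorem happy_step {st st' : Equiv.Perm (TV b k) × Equiv.Perm (TV b k)}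
    {ρ : Equiv.Perm (Fin b)} {lam : TV b k → ℕ}
    (I : Inv ρ (phi st) lam) (h : HappySwapStep (TGraph b k) st st') :
    Inv ρ (phi st') lam ∧ (phi st').support.card + 1 ≤ (phi st).support.card := by
  obtain ⟨a, c, hadj, ⟨-, h1⟩, ⟨-, h2⟩, e1, e2⟩ := h
  have e : phi st' = (Equiv.swap a c).trans (phi st) := by
    unfold phi
    rw [e1, e2]
    ext1 v
    simp
  rw [e]
  rw [Equiv.apply_symm_apply] at h1 h2
  exact step_happy I (adj_trel hadj) h1 h2

theorem dest_step {st st' : Equiv.Perm (TV b k) × Equiv.Perm (TV b k)}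
    {ρ : Equiv.Perm (Fin b)} {lam : TV b k → ℕ}
    (I : Inv ρ (phi st) lam) (h : HappyDestStep (TGraph b k) st st') :
    Inv ρ (phi st') lam ∧ (phi st').support.card ≤ (phi st).support.card := by
  obtain ⟨a, c, hadj, ⟨-, h1⟩, ⟨-, h2⟩, e1, e2⟩ := h
  have e : phi st' = ((Equiv.swap a c).trans (phi st).symm).symm := by
    unfold phi
    rw [e1, e2]
    ext1 v
    simp
  rw [Equiv.apply_symm_apply] at h1 h2
  have := step_happy I.inv (adj_trel hadj) h1 h2
  refine ⟨?_, ?_⟩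
  · rw [e]
    have h3 := this.1.inv
    rwa [Equiv.symm_symm] at h3
  · have h3 := this.2
    have h4 := Equiv.Perm.support_inv (phi st)
    have h5 := Equiv.Perm.support_inv (phi st')
    rw [show (phi st')⁻¹ = (Equiv.swap a c).trans (phi st).symm by rw [e]; rfl] at h5
    rw [show (phi st)⁻¹ = (phi st).symm from rfl] at h4
    rw [← h4, ← h5]
    omega

theorem shove_step {st st' : Equiv.Perm (TV b k) × Equiv.Perm (TV b k)}
    {ρ : Equiv.Perm (Fin b)} {lam : TV b k → ℕ} (hρ : ∀ i j, ρ.SameCycle i j)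
    (I : Inv ρ (phi st) lam) (h : ShoveStep (TGraph b k) st st') :
    (∃ lam', Inv ρ (phi st') lam') ∧ (phi st').support.card ≤ (phi st).support.card := by
  obtain ⟨a, c, hadj, hh, ⟨-, h1⟩, ⟨-, h2⟩, e1, e2⟩ := h
  have e : phi st' = ((Equiv.swap a c).trans (phi st)).trans (Equiv.swap a c) := by
    unfold phi
    rw [e1, e2]
    ext1 v
    simp
  rw [Equiv.apply_symm_apply] at h1 h2
  have hc : phi st c = c := by
    simp [phi, hh]
  change (TGraph b k).dist c (phi st a) < (TGraph b k).dist a (phi st a) at h1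
  change (TGraph b k).dist c ((phi st).symm a) < (TGraph b k).dist a ((phi st).symm a) at h2
  refine ⟨⟨lam ∘ Equiv.swap a c, ?_⟩, ?_⟩
  · rw [e]
    by_cases ha0 : a = none
    · subst ha0
      have h := (adj_trel hadj).resolve_right (by
        rcases c with _ | ⟨j, i⟩ | l <;> simp [trel])
      exact I.shove_out hρ h hc (want_down h h1) (want_down h h2)
    by_cases hc0 : c = none
    · subst hc0
      have h := (adj_trel hadj).resolve_left (by
        rcases a with _ | ⟨j, i⟩ | l <;> simp [trel])
      exact I.shove_in hρ h hc (want_up h h1)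
    · exact I.shove_branch (adj_trel hadj) ha0 hc0 hc
  · have := Equiv.Perm.card_support_conj (σ := Equiv.swap a c) (τ := phi st)
    rw [show Equiv.swap a c * phi st * (Equiv.swap a c)⁻¹ = phi st' by
      rw [e, Equiv.swap_inv]; rfl] at this
    exact this.le

end Aux

open scoped Classical in
theorem vaughan_happy_swaps_at_most_bk (b k : ℕ) (hb : Odd b) (T : ℕ)
    (st : ℕ → Equiv.Perm (TV b k) × Equiv.Perm (TV b k))
    (hstart : st 0 = (1, piT b k))
    (hstep : ∀ i < T,
      HappySwapStep (TGraph b k) (st i) (st (i + 1)) ∨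
      HappyDestStep (TGraph b k) (st i) (st (i + 1)) ∨
      ((¬ ∃ st', HappySwapStep (TGraph b k) (st i) st') ∧
       (¬ ∃ st', HappyDestStep (TGraph b k) (st i) st') ∧
       ShoveStep (TGraph b k) (st i) (st (i + 1))))
    (hend : (st T).1 = (st T).2) :
    ((Finset.range T).filter
        (fun i => HappySwapStep (TGraph b k) (st i) (st (i + 1)))).card ≤ b * k := by
  have main : ∀ n ≤ T, (∃ lam, Inv (finRotate b) (phi (st n)) lam) ∧
      ((Finset.range n).filter
        (fun i => HappySwapStep (TGraph b k) (st i) (st (i + 1)))).card +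
          (phi (st n)).support.card ≤ b * k := by
    intro n
    induction n with
    | zero =>
      intro _
      have e : phi (st 0) = piT b k := by rw [hstart]; rfl
      rw [e]
      refine ⟨⟨_, Inv.init⟩, ?_⟩
      simpa using init_card
    | succ n ih =>
      intro hn
      obtain ⟨⟨lam, I⟩, hcard⟩ := ih (by omega)
      rw [Finset.range_add_one, Finset.filter_insert]
      by_cases hH : HappySwapStep (TGraph b k) (st n) (st (n + 1))
      · obtain ⟨I', h'⟩ := happy_step I hH
        refine ⟨⟨lam, I'⟩, ?_⟩
        rw [if_pos hH, Finset.card_insert_of_notMem (by simp)]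
        omega
      · rw [if_neg hH]
        rcases hstep n (by omega) with h | h | ⟨-, -, h⟩
        · exact absurd h hH
        · obtain ⟨I', h'⟩ := dest_step I h
          exact ⟨⟨lam, I'⟩, by omega⟩
        · obtain ⟨I', h'⟩ := shove_step rot_same I h
          exact ⟨I', by omega⟩
  have := (main T le_rfl).2
  omega

end Straying
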